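/- Fix h ∈ ℝ, set θ_n := 1 + h/√n, and let X ∈ {−1,1}ⁿ have the Curie–Weiss distribution P_{1,CW}. Then the log-likelihood ratio log( dP_{θ_n,CW}/dP_{1,CW} (X) ) = (h/(2√n))·n·X̄² − ( Z_n(θ_n,CW) − Z_n(1,CW) ) converges in distribution to (h/2)·U² − F(h) + F(0), where U is a random variable with law H_0. -/

import Mathlib

open MeasureTheory Filter

noncomputable def spin (b : Bool) : ℝ := if b then 1 else -1

noncomputable def mag (n : ℕ) (x : Fin n → Bool) : ℝ := (∑ i, spin (x i)) / n

/-- Unnormalized Curie–Weiss measure on `{-1,1}ⁿ` (encoded by `Fin n → Bool`). -/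
noncomputable def cwUnnorm (n : ℕ) (θ : ℝ) : Measure (Fin n → Bool) :=
  ∑ x : Fin n → Bool,
    ENNReal.ofReal (Real.exp ((n : ℝ) * θ * mag n x ^ 2 / 2)) • Measure.dirac x

/-- The Curie–Weiss model `P_{θ,CW}`. -/
noncomputable def cwMeasure (n : ℕ) (θ : ℝ) : Measure (Fin n → Bool) :=
  (cwUnnorm n θ Set.univ)⁻¹ • cwUnnorm n θ

/-- Log normalizing constant of the Curie–Weiss model. -/
noncomputable def Zcw (n : ℕ) (θ : ℝ) : ℝ :=
  Real.log (∑ x : Fin n → Bool, Real.exp ((n : ℝ) * θ * mag n x ^ 2 / 2))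

/-- `F(h) = log ∫ exp(-u⁴/12 + h u²/2) du`. -/
noncomputable def Fcrit (h : ℝ) : ℝ :=
  Real.log (∫ u : ℝ, Real.exp (-(u ^ 4) / 12 + h * u ^ 2 / 2))

/-- The probability distribution `H_h` with density `exp(-u⁴/12 + h u²/2 - F(h))`. -/
noncomputable def Hmeasure (h : ℝ) : Measure ℝ :=
  MeasureTheory.volume.withDensity fun u =>
    ENNReal.ofReal (Real.exp (-(u ^ 4) / 12 + h * u ^ 2 / 2 - Fcrit h))

/-
Adding to `n ^ (1 / 4) * mag n` an independent centered Gaussian of variance `1 / (θ * √n)` turns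
the Curie–Weiss law into an absolutely continuous one, whose density is proportional to an explicit
kernel because the sum over the spins factorizes (Hubbard–Stratonovich). Since
`log cosh t = t ^ 2 / 2 - t ^ 4 / 12 + O(t ^ 6)`, in the window `√n * (θ - 1) → h` the kernel tends
to `exp (-u ^ 4 / 12 + h * u ^ 2 / 2)` with a Gaussian domination. Its total mass gives
`Z_n(θ_n) - Z_n(1) → F(h) - F(0)`; its Fourier transform, from which the vanishing Gaussian noise
factors out, gives convergence of `n ^ (1 / 4) * mag n` in distribution by Lévy's theorem. The
log-likelihood ratio is a continuous function of these two converging quantities.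
-/

open scoped Topology

section LogCosh

lemma isMinOn_univ_of_hasDerivAt2_nonneg {f f' f'' : ℝ → ℝ} {a : ℝ}
    (hf : ∀ x, HasDerivAt f (f' x) x) (hf' : ∀ x, HasDerivAt f' (f'' x) x)
    (hf'' : ∀ x, 0 ≤ f'' x) (ha : f' a = 0) : IsMinOn f Set.univ a := by
  have f_convex : ConvexOn ℝ Set.univ f :=
    convexOn_of_hasDerivWithinAt2_nonneg convex_univ
      (fun x _ => (hf x).continuousAt.continuousWithinAt)
      (fun x _ => (hf x).hasDerivWithinAt) (fun x _ => (hf' x).hasDerivWithinAt)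
      (fun x _ => hf'' x)
  refine f_convex.isMinOn_of_leftDeriv_eq_zero (by simp) ?_
  rw [(hf a).hasDerivWithinAt.derivWithin (uniqueDiffWithinAt_Iio a), ha]

lemma hasDerivAt_log_cosh (t : ℝ) :
    HasDerivAt (fun t => Real.log (Real.cosh t)) (Real.tanh t) t := by
  rw [Real.tanh_eq_sinh_div_cosh]
  exact (Real.hasDerivAt_cosh t).log (Real.cosh_pos t).ne'

lemma hasDerivAt_tanh (t : ℝ) : HasDerivAt Real.tanh (Real.cosh t ^ 2)⁻¹ t := by
  rw [show Real.tanh = fun t => Real.sinh t / Real.cosh t from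
    funext Real.tanh_eq_sinh_div_cosh]
  refine ((Real.hasDerivAt_sinh t).fun_div (Real.hasDerivAt_cosh t)
    (Real.cosh_pos t).ne').congr_deriv ?_
  rw [← sq, ← sq, Real.cosh_sq_sub_sinh_sq, one_div]

lemma one_sub_sq_le_inv_cosh_sq (t : ℝ) : 1 - t ^ 2 ≤ (Real.cosh t ^ 2)⁻¹ := by
  have cosh_sq_le : Real.cosh t ^ 2 ≤ Real.exp (t ^ 2) := calc
    Real.cosh t ^ 2 ≤ Real.exp (t ^ 2 / 2) ^ 2 :=
      pow_le_pow_left₀ (Real.cosh_pos t).le (Real.cosh_le_exp_half_sq t) 2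
    _ = Real.exp (t ^ 2) := by
      rw [← Real.exp_nat_mul]
      congr 1
      push_cast
      ring
  calc 1 - t ^ 2 ≤ Real.exp (-t ^ 2) := Real.one_sub_le_exp_neg _
    _ = (Real.exp (t ^ 2))⁻¹ := Real.exp_neg _
    _ ≤ (Real.cosh t ^ 2)⁻¹ := inv_anti₀ (pow_pos (Real.cosh_pos t) 2) cosh_sq_le

lemma inv_cosh_sq_le (t : ℝ) : (Real.cosh t ^ 2)⁻¹ ≤ (1 + t ^ 2)⁻¹ := by
  have sq_le_sinh_sq : t ^ 2 ≤ Real.sinh t ^ 2 := by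
    rw [sq_le_sq, Real.abs_sinh]
    exact Real.self_le_sinh_iff.2 (abs_nonneg t)
  rw [Real.cosh_sq']
  gcongr

lemma le_log_cosh (t : ℝ) : t ^ 2 / 2 - t ^ 4 / 12 ≤ Real.log (Real.cosh t) := by
  have isMin : IsMinOn (fun t => Real.log (Real.cosh t) - (t ^ 2 / 2 - t ^ 4 / 12))
      Set.univ 0 := by
    refine isMinOn_univ_of_hasDerivAt2_nonneg
      (f' := fun t => Real.tanh t - (t - t ^ 3 / 3))
      (f'' := fun t => (Real.cosh t ^ 2)⁻¹ - (1 - t ^ 2)) (fun t => ?_) (fun t => ?_)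
      (fun t => sub_nonneg.2 (one_sub_sq_le_inv_cosh_sq t)) (by simp)
    · refine ((hasDerivAt_log_cosh t).fun_sub (((hasDerivAt_pow 2 t).div_const 2).fun_sub
        ((hasDerivAt_pow 4 t).div_const 12))).congr_deriv ?_
      norm_num
      ring
    · refine ((hasDerivAt_tanh t).fun_sub ((hasDerivAt_id' t).fun_sub
        ((hasDerivAt_pow 3 t).div_const 3))).congr_deriv ?_
      norm_num
  simpa using isMin (Set.mem_univ t)

lemma hasDerivAt_inv_one_add_sq_pow (k : ℕ) (t : ℝ) :
    HasDerivAt (fun t : ℝ => ((1 + t ^ 2) ^ k)⁻¹) (-(2 * k * t / (1 + t ^ 2) ^ (k + 1))) t := by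
  have pos : 0 < 1 + t ^ 2 := by positivity
  refine ((((hasDerivAt_pow 2 t).const_add 1).fun_pow k).fun_inv
    (pow_pos pos k).ne').congr_deriv ?_
  cases k with
  | zero => simp
  | succ k =>
    simp only [Nat.add_sub_cancel]
    field_simp
    push_cast
    ring

/- The right-hand side is `t² / 2 - t⁴ / 12 + O(t⁶)` at `0`, like `log cosh`, and unlike the Taylor
polynomial it stays below a multiple `< 1 / 2` of `t²` at infinity. -/
lemma log_cosh_le (t : ℝ) :
    Real.log (Real.cosh t) ≤ t ^ 2 / 2 - t ^ 4 / (12 * (1 + t ^ 2)) := by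
  have partial_fractions :
      t ^ 4 / (12 * (1 + t ^ 2)) = (t ^ 2 - 1 + ((1 + t ^ 2) ^ 1)⁻¹) / 12 := by
    field_simp
    ring
  have second_deriv_le (t : ℝ) : (1 + t ^ 2)⁻¹ ≤
      1 - (1 - ((1 + t ^ 2) ^ 2)⁻¹ + 4 * t ^ 2 / (1 + t ^ 2) ^ 3) / 6 := by
    have difference : 1 - (1 - ((1 + t ^ 2) ^ 2)⁻¹ + 4 * t ^ 2 / (1 + t ^ 2) ^ 3) / 6
        - (1 + t ^ 2)⁻¹ = t ^ 4 * (9 + 5 * t ^ 2) / (6 * (1 + t ^ 2) ^ 3) := by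
      field_simp
      ring
    rw [← sub_nonneg, difference]
    positivity
  have isMin : IsMinOn (fun t => t ^ 2 / 2 - (t ^ 2 - 1 + ((1 + t ^ 2) ^ 1)⁻¹) / 12
      - Real.log (Real.cosh t)) Set.univ 0 := by
    refine isMinOn_univ_of_hasDerivAt2_nonneg
      (f' := fun t => t - (t - t * ((1 + t ^ 2) ^ 2)⁻¹) / 6 - Real.tanh t)
      (f'' := fun t => 1 - (1 - ((1 + t ^ 2) ^ 2)⁻¹ + 4 * t ^ 2 / (1 + t ^ 2) ^ 3) / 6
        - (Real.cosh t ^ 2)⁻¹) (fun t => ?_) (fun t => ?_)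
      (fun t => sub_nonneg.2 ((inv_cosh_sq_le t).trans (second_deriv_le t))) (by simp)
    · refine ((((hasDerivAt_pow 2 t).div_const 2).fun_sub
        ((((hasDerivAt_pow 2 t).sub_const 1).fun_add
          (hasDerivAt_inv_one_add_sq_pow 1 t)).div_const 12)).fun_sub
        (hasDerivAt_log_cosh t)).congr_deriv ?_
      norm_num
      ring
    · refine (((hasDerivAt_id' t).fun_sub (((hasDerivAt_id' t).fun_sub ((hasDerivAt_id' t).fun_mul
        (hasDerivAt_inv_one_add_sq_pow 2 t))).div_const 6)).fun_sub
        (hasDerivAt_tanh t)).congr_deriv ?_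
      norm_num
      ring
  rw [partial_fractions]
  simpa using isMin (Set.mem_univ t)

end LogCosh

section CritKernel

/-- Up to the factor `2 ^ n`, the unnormalized density of the sum of the critically rescaled
magnetization `n ^ (1 / 4) * mag n` under the Curie–Weiss model and of an independent centered
Gaussian of variance `1 / (θ * r)`, where `r = √n`. -/
noncomputable def critKernel (r θ u : ℝ) : ℝ :=
  Real.exp (r ^ 2 * Real.log (Real.cosh (θ * u / √r)) - θ * r * u ^ 2 / 2)

lemma critKernel_pos (r θ u : ℝ) : 0 < critKernel r θ u := Real.exp_pos _

lemma continuous_critKernel (r θ : ℝ) : Continuous (critKernel r θ) := by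
  unfold critKernel
  fun_prop (disch := exact fun _ => (Real.cosh_pos _).ne')

lemma le_critKernel {r : ℝ} (hr : 0 < r) (θ u : ℝ) :
    Real.exp (r * (θ - 1) * θ / 2 * u ^ 2 - θ ^ 4 * u ^ 4 / 12) ≤ critKernel r θ u := by
  refine Real.exp_le_exp.2 ?_
  have sqrt_sq : √r ^ 2 = r := Real.sq_sqrt hr.le
  calc r * (θ - 1) * θ / 2 * u ^ 2 - θ ^ 4 * u ^ 4 / 12
      = r ^ 2 * ((θ * u / √r) ^ 2 / 2 - (θ * u / √r) ^ 4 / 12) - θ * r * u ^ 2 / 2 := by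
        rw [show (θ * u / √r) ^ 4 = ((θ * u / √r) ^ 2) ^ 2 by ring, div_pow, sqrt_sq]
        field_simp
        ring
    _ ≤ _ := by gcongr; exact le_log_cosh _

lemma critKernel_le {r : ℝ} (hr : 0 < r) (θ u : ℝ) :
    critKernel r θ u ≤ Real.exp (r * (θ - 1) * θ / 2 * u ^ 2
      - (θ ^ 2 * u ^ 2) ^ 2 / (1 + θ ^ 2 * u ^ 2 / r) / 12) := by
  refine Real.exp_le_exp.2 ?_
  have sqrt_sq : √r ^ 2 = r := Real.sq_sqrt hr.le
  calc r ^ 2 * Real.log (Real.cosh (θ * u / √r)) - θ * r * u ^ 2 / 2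
      ≤ r ^ 2 * ((θ * u / √r) ^ 2 / 2 - (θ * u / √r) ^ 4 / (12 * (1 + (θ * u / √r) ^ 2)))
        - θ * r * u ^ 2 / 2 := by gcongr; exact log_cosh_le _
    _ = _ := by
        rw [show (θ * u / √r) ^ 4 = ((θ * u / √r) ^ 2) ^ 2 by ring, div_pow, sqrt_sq]
        field_simp
        ring

lemma mul_sub_sq_le_sq_div {R r v : ℝ} (hR : 0 < R) (hRr : R ≤ r) (hv : 0 ≤ v) :
    R * v - R ^ 2 ≤ v ^ 2 / (1 + v / r) := by
  have denom_le : 1 + v / r ≤ 1 + v / R := by gcongr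
  calc R * v - R ^ 2 ≤ v ^ 2 / (1 + v / R) := by
        rw [le_div_iff₀ (by positivity)]
        have expand : (R * v - R ^ 2) * (1 + v / R) = v ^ 2 - R ^ 2 := by
          field_simp
          ring
        linarith [sq_nonneg R]
    _ ≤ v ^ 2 / (1 + v / r) := by
        gcongr
        have : 0 < r := hR.trans_le hRr
        positivity

lemma critKernel_le_gaussian {A r θ : ℝ} (hA : 0 ≤ A) (hr : 24 * (A + 1) ≤ r)
    (hθ : r * (θ - 1) * θ / 2 ≤ A) (hθ' : 1 / 2 ≤ θ ^ 2) (u : ℝ) :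
    critKernel r θ u ≤ Real.exp (48 * (A + 1) ^ 2) * Real.exp (-1 * u ^ 2) := by
  rw [← Real.exp_add]
  refine (critKernel_le (by linarith) θ u).trans (Real.exp_le_exp.2 ?_)
  have quartic := mul_sub_sq_le_sq_div (by linarith) hr
    (by positivity : 0 ≤ θ ^ 2 * u ^ 2)
  calc r * (θ - 1) * θ / 2 * u ^ 2 - (θ ^ 2 * u ^ 2) ^ 2 / (1 + θ ^ 2 * u ^ 2 / r) / 12
      ≤ A * u ^ 2 - (24 * (A + 1) * (1 / 2 * u ^ 2) - (24 * (A + 1)) ^ 2) / 12 := by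
        gcongr
        refine le_trans ?_ quartic
        gcongr
    _ = 48 * (A + 1) ^ 2 + -1 * u ^ 2 := by ring

variable {ι : Type*} {l : Filter ι} {r θ : ι → ℝ} {h : ℝ}

lemma tendsto_one_of_tendsto_mul_sub_one (hr : Tendsto r l atTop)
    (hθ : Tendsto (fun i => r i * (θ i - 1)) l (𝓝 h)) : Tendsto θ l (𝓝 1) := by
  have scaled : Tendsto (fun i => 1 + (r i)⁻¹ * (r i * (θ i - 1))) l (𝓝 (1 + 0 * h)) :=
    ((tendsto_inv_atTop_zero.comp hr).mul hθ).const_add 1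
  rw [zero_mul, add_zero] at scaled
  refine scaled.congr' ?_
  filter_upwards [hr.eventually_ne_atTop 0] with i hi
  rw [inv_mul_cancel_left₀ hi, add_sub_cancel]

lemma eventually_critKernel_le_gaussian (hr : Tendsto r l atTop)
    (hθ : Tendsto (fun i => r i * (θ i - 1)) l (𝓝 h)) :
    ∃ C, ∀ᶠ i in l, ∀ u, critKernel (r i) (θ i) u ≤ C * Real.exp (-1 * u ^ 2) := by
  have hθ_one := tendsto_one_of_tendsto_mul_sub_one hr hθ
  have coeff_tendsto : Tendsto (fun i => r i * (θ i - 1) * θ i / 2) l (𝓝 (h * 1 / 2)) :=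
    (hθ.mul hθ_one).div_const 2
  have coeff_le : ∀ᶠ i in l, r i * (θ i - 1) * θ i / 2 ≤ |h| + 1 :=
    coeff_tendsto.eventually_le_const (by linarith [le_abs_self h, abs_nonneg h])
  have half_le_sq : ∀ᶠ i in l, 1 / 2 ≤ θ i ^ 2 :=
    (hθ_one.pow 2).eventually_const_le (by norm_num)
  refine ⟨Real.exp (48 * (|h| + 1 + 1) ^ 2), ?_⟩
  filter_upwards [coeff_le, half_le_sq, hr.eventually_ge_atTop (24 * (|h| + 1 + 1))]
    with i coeff_le half_le_sq le_r
  exact critKernel_le_gaussian (by positivity) le_r coeff_le half_le_sq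

lemma tendsto_critKernel (hr : Tendsto r l atTop)
    (hθ : Tendsto (fun i => r i * (θ i - 1)) l (𝓝 h)) (u : ℝ) :
    Tendsto (fun i => critKernel (r i) (θ i) u) l
      (𝓝 (Real.exp (-(u ^ 4) / 12 + h * u ^ 2 / 2))) := by
  have hθ_one := tendsto_one_of_tendsto_mul_sub_one hr hθ
  have quadratic : Tendsto (fun i => r i * (θ i - 1) * θ i / 2 * u ^ 2) l
      (𝓝 (h * 1 / 2 * u ^ 2)) := ((hθ.mul hθ_one).div_const 2).mul_const _
  have lower : Tendsto (fun i => θ i ^ 4 * u ^ 4 / 12) l (𝓝 (1 ^ 4 * u ^ 4 / 12)) :=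
    ((hθ_one.pow 4).mul_const _).div_const 12
  have square : Tendsto (fun i => θ i ^ 2 * u ^ 2) l (𝓝 (1 ^ 2 * u ^ 2)) :=
    (hθ_one.pow 2).mul_const _
  have upper : Tendsto
      (fun i => (θ i ^ 2 * u ^ 2) ^ 2 / (1 + θ i ^ 2 * u ^ 2 / r i) / 12) l
      (𝓝 ((1 ^ 2 * u ^ 2) ^ 2 / (1 + 0) / 12)) :=
    ((square.pow 2).div ((square.div_atTop hr).const_add 1) (by norm_num)).div_const 12
  refine tendsto_of_tendsto_of_tendsto_of_le_of_le'
    (g := fun i => Real.exp (r i * (θ i - 1) * θ i / 2 * u ^ 2 - θ i ^ 4 * u ^ 4 / 12))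
    (h := fun i => Real.exp (r i * (θ i - 1) * θ i / 2 * u ^ 2
      - (θ i ^ 2 * u ^ 2) ^ 2 / (1 + θ i ^ 2 * u ^ 2 / r i) / 12)) ?_ ?_
    ((hr.eventually_gt_atTop 0).mono fun i hi => le_critKernel hi _ _)
    ((hr.eventually_gt_atTop 0).mono fun i hi => critKernel_le hi _ _)
  · convert! (quadratic.sub lower).rexp using 3
    ring
  · convert! (quadratic.sub upper).rexp using 3
    ring

theorem tendsto_integral_critKernel_smul [l.IsCountablyGenerated]
    {E : Type*} [NormedAddCommGroup E] [NormedSpace ℝ E] {g : ℝ → E} {B : ℝ}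
    (hr : Tendsto r l atTop) (hθ : Tendsto (fun i => r i * (θ i - 1)) l (𝓝 h))
    (hg : AEStronglyMeasurable g) (hgB : ∀ u, ‖g u‖ ≤ B) :
    Tendsto (fun i => ∫ u, critKernel (r i) (θ i) u • g u) l
      (𝓝 (∫ u, Real.exp (-(u ^ 4) / 12 + h * u ^ 2 / 2) • g u)) := by
  obtain ⟨C, hC⟩ := eventually_critKernel_le_gaussian hr hθ
  refine tendsto_integral_filter_of_dominated_convergence
    (fun u => C * Real.exp (-1 * u ^ 2) * B)
    (Eventually.of_forall fun i => (continuous_critKernel _ _).aestronglyMeasurable.smul hg)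
    (hC.mono fun i hi => ae_of_all _ fun u => ?_)
    (((integrable_exp_neg_mul_sq one_pos).const_mul C).mul_const B)
    (ae_of_all _ fun u => (tendsto_critKernel hr hθ u).smul_const (g u))
  rw [norm_smul, Real.norm_of_nonneg (critKernel_pos _ _ _).le]
  exact mul_le_mul (hi u) (hgB u) (norm_nonneg _) ((critKernel_pos _ _ _).le.trans (hi u))

lemma tendsto_integral_critKernel [l.IsCountablyGenerated] (hr : Tendsto r l atTop)
    (hθ : Tendsto (fun i => r i * (θ i - 1)) l (𝓝 h)) :
    Tendsto (fun i => ∫ u, critKernel (r i) (θ i) u) l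
      (𝓝 (∫ u, Real.exp (-(u ^ 4) / 12 + h * u ^ 2 / 2))) := by
  simpa only [smul_eq_mul, mul_one] using tendsto_integral_critKernel_smul (g := fun _ => (1 : ℝ))
    (B := 1) hr hθ aestronglyMeasurable_const (by simp)

end CritKernel

section GaussianMixture

lemma integral_sum_exp_smul_cexp {ι : Type*} (s : Finset ι) (w : ι → ℝ) {c : ℝ} (hc : 0 < c)
    (t : ℝ) :
    ∫ u : ℝ, (∑ i ∈ s, Real.exp (c * w i * u - c * u ^ 2 / 2)) • Complex.exp (t * u * Complex.I) =
      (√(2 * Real.pi / c) * Real.exp (-(t ^ 2) / (2 * c))) •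
        ∑ i ∈ s, Real.exp (c * w i ^ 2 / 2) • Complex.exp (t * w i * Complex.I) := by
  have re_neg : (-(c / 2) : ℂ).re < 0 := by
    rw [← Complex.ofReal_ofNat, ← Complex.ofReal_div, ← Complex.ofReal_neg, Complex.ofReal_re]
    linarith
  have as_quadratic (i : ι) (u : ℝ) :
      Real.exp (c * w i * u - c * u ^ 2 / 2) • Complex.exp (t * u * Complex.I) =
        Complex.exp (-(c / 2) * u ^ 2 + (c * w i + t * Complex.I) * u + 0) := by
    rw [Complex.real_smul, Complex.ofReal_exp, ← Complex.exp_add]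
    push_cast
    ring_nf
  have sqrt_eq_cpow : (√(2 * Real.pi / c) : ℂ) = (Real.pi / - -(c / 2 : ℂ)) ^ (1 / 2 : ℂ) := by
    rw [neg_neg, Real.sqrt_eq_rpow, Complex.ofReal_cpow (by positivity), mul_comm,
      ← div_div_eq_mul_div]
    push_cast
    rfl
  have complete_square (i : ι) :
      (0 - (c * w i + t * Complex.I) ^ 2 / (4 * -(c / 2)) : ℂ) =
        (-(t ^ 2) / (2 * c) : ℝ) + ((c * w i ^ 2 / 2 : ℝ) + t * w i * Complex.I) := by
    have c_ne : (c : ℂ) ≠ 0 := by exact_mod_cast hc.ne'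
    push_cast
    field_simp
    linear_combination 4 * (t : ℂ) ^ 2 * Complex.I_sq
  simp_rw [Finset.sum_smul, as_quadratic]
  rw [integral_finsetSum _ fun i _ => integrable_cexp_quadratic' re_neg _ _, Finset.smul_sum]
  refine Finset.sum_congr rfl fun i _ => ?_
  rw [integral_cexp_quadratic re_neg, complete_square, Complex.exp_add, Complex.exp_add,
    Complex.real_smul, Complex.real_smul, Complex.ofReal_mul, Complex.ofReal_exp,
    Complex.ofReal_exp, sqrt_eq_cpow]
  ring

end GaussianMixture

section CurieWeiss

/-- The magnetization rescaled by `n ^ (1 / 4)`, the scale at which it has a nondegenerate limit law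
at criticality; the fourth root is encoded as an iterated square root. -/
noncomputable def critMag (n : ℕ) (x : Fin n → Bool) : ℝ := √√(n : ℝ) * mag n x

lemma sum_exp_mul_sum_spin (n : ℕ) (a : ℝ) :
    ∑ x : Fin n → Bool, Real.exp (a * ∑ i, spin (x i)) = (2 * Real.cosh a) ^ n := by
  simp_rw [Finset.mul_sum, Real.exp_sum]
  rw [← Fintype.prod_sum fun (_ : Fin n) b => Real.exp (a * spin b)]
  simp only [spin, Fintype.sum_bool, if_true, Bool.false_eq_true, if_false, Finset.prod_const,
    Finset.card_univ, Fintype.card_fin, mul_one, mul_neg, Real.cosh_eq]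
  congr 1
  ring

lemma sqrt_mul_critMag_sq (n : ℕ) (x : Fin n → Bool) :
    √(n : ℝ) * critMag n x ^ 2 = n * mag n x ^ 2 := by
  rw [critMag, mul_pow, Real.sq_sqrt (Real.sqrt_nonneg _), ← mul_assoc,
    Real.mul_self_sqrt n.cast_nonneg]

lemma div_two_mul_sqrt_mul_mag_sq (h : ℝ) (n : ℕ) (x : Fin n → Bool) :
    h / (2 * √(n : ℝ)) * (n * mag n x ^ 2) = h / 2 * critMag n x ^ 2 := by
  rcases n.eq_zero_or_pos with rfl | hn
  · simp [critMag]
  rw [← sqrt_mul_critMag_sq]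
  field_simp

/- Expanding the square in `exp (-c * (u - w) ^ 2 / 2)` leaves the Curie–Weiss weight
`exp (c * w ^ 2 / 2)` times an exponential of a linear function of the spins, whose sum
factorizes. -/
lemma sum_exp_critMag (n : ℕ) (θ u : ℝ) :
    ∑ x, Real.exp (θ * √(n : ℝ) * critMag n x * u - θ * √(n : ℝ) * u ^ 2 / 2) =
      2 ^ n * critKernel √(n : ℝ) θ u := by
  have exponent (x : Fin n → Bool) : θ * √(n : ℝ) * critMag n x * u =
      θ * u / √√(n : ℝ) * ∑ i, spin (x i) := by
    rcases n.eq_zero_or_pos with rfl | hn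
    · simp
    have sqrt_sqrt_pos : 0 < √√(n : ℝ) := by positivity
    have sqrt_eq : √(n : ℝ) = √√(n : ℝ) ^ 2 := (Real.sq_sqrt (Real.sqrt_nonneg _)).symm
    have card_eq : (n : ℝ) = (√√(n : ℝ) ^ 2) ^ 2 := by rw [← sqrt_eq, Real.sq_sqrt n.cast_nonneg]
    rw [critMag, mag]
    generalize √√(n : ℝ) = q at *
    rw [sqrt_eq, card_eq]
    field_simp
  simp_rw [exponent, Real.exp_sub, ← Finset.sum_div]
  rw [sum_exp_mul_sum_spin, mul_pow, mul_div_assoc, critKernel, Real.exp_sub,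
    Real.sq_sqrt n.cast_nonneg, Real.exp_nat_mul, Real.exp_log (Real.cosh_pos _)]

lemma two_pow_smul_integral_critKernel_smul_cexp {n : ℕ} (hn : 0 < n) {θ : ℝ} (hθ : 0 < θ)
    (t : ℝ) :
    (2 : ℝ) ^ n • ∫ u, critKernel √(n : ℝ) θ u • Complex.exp (t * u * Complex.I) =
      (√(2 * Real.pi / (θ * √(n : ℝ))) * Real.exp (-(t ^ 2) / (2 * (θ * √(n : ℝ))))) •
        ∑ x, Real.exp (n * θ * mag n x ^ 2 / 2) • Complex.exp (t * critMag n x * Complex.I) := by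
  have mixture := integral_sum_exp_smul_cexp Finset.univ (critMag n)
    (show 0 < θ * √(n : ℝ) by positivity) t
  have weight (x : Fin n → Bool) :
      θ * √(n : ℝ) * critMag n x ^ 2 / 2 = n * θ * mag n x ^ 2 / 2 := by
    linear_combination θ / 2 * sqrt_mul_critMag_sq n x
  simpa only [sum_exp_critMag, mul_smul, integral_smul, weight] using mixture

lemma two_pow_mul_integral_critKernel {n : ℕ} (hn : 0 < n) {θ : ℝ} (hθ : 0 < θ) :
    2 ^ n * ∫ u, critKernel √(n : ℝ) θ u =
      √(2 * Real.pi / (θ * √(n : ℝ))) * ∑ x, Real.exp (n * θ * mag n x ^ 2 / 2) := by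
  have at_zero := two_pow_smul_integral_critKernel_smul_cexp hn hθ 0
  simp only [Complex.ofReal_zero, zero_mul, Complex.exp_zero, Complex.real_smul, mul_one,
    integral_complex_ofReal, ne_eq, OfNat.ofNat_ne_zero, not_false_eq_true, zero_pow, neg_zero,
    zero_div, Real.exp_zero] at at_zero
  exact_mod_cast at_zero

end CurieWeiss

section Tilted

lemma integral_tilted_eq_inv_smul_integral {α E : Type*} [MeasurableSpace α] [NormedAddCommGroup E]
    [NormedSpace ℝ E] (μ : Measure α) (f : α → ℝ) (g : α → E) :
    ∫ x, g x ∂μ.tilted f = (∫ x, Real.exp (f x) ∂μ)⁻¹ • ∫ x, Real.exp (f x) • g x ∂μ := by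
  simp_rw [integral_tilted, div_eq_inv_mul, mul_smul, integral_smul]

lemma tilted_eq_inv_smul_withDensity {α : Type*} [MeasurableSpace α] {μ : Measure α} [NeZero μ]
    {f : α → ℝ} (hf : Integrable (fun x => Real.exp (f x)) μ) :
    μ.tilted f = (μ.withDensity (fun x => ENNReal.ofReal (Real.exp (f x))) Set.univ)⁻¹ •
      μ.withDensity fun x => ENNReal.ofReal (Real.exp (f x)) := by
  have mass : μ.withDensity (fun x => ENNReal.ofReal (Real.exp (f x))) Set.univ =
      ENNReal.ofReal (∫ x, Real.exp (f x) ∂μ) := by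
    rw [withDensity_apply _ .univ, setLIntegral_univ,
      ofReal_integral_eq_lintegral_ofReal hf (ae_of_all _ fun _ => Real.exp_nonneg _)]
  rw [mass, ← withDensity_smul' _ _ (ENNReal.inv_ne_top.2
    (ENNReal.ofReal_pos.2 (integral_exp_pos hf)).ne'), Measure.tilted]
  simp_rw [ENNReal.ofReal_div_of_pos (integral_exp_pos hf), ENNReal.div_eq_inv_mul]
  rfl

lemma cwUnnorm_eq_withDensity (n : ℕ) (θ : ℝ) :
    cwUnnorm n θ = Measure.count.withDensity fun x =>
      ENNReal.ofReal (Real.exp (n * θ * mag n x ^ 2 / 2)) := by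
  classical
  refine Measure.ext_of_singleton fun x => ?_
  simp [cwUnnorm, Measure.finsetSum_apply, Set.indicator_apply]

lemma cwMeasure_eq_tilted (n : ℕ) (θ : ℝ) :
    cwMeasure n θ = Measure.count.tilted fun x => n * θ * mag n x ^ 2 / 2 := by
  rw [cwMeasure, cwUnnorm_eq_withDensity, tilted_eq_inv_smul_withDensity .of_finite]

instance isProbabilityMeasure_cwMeasure (n : ℕ) (θ : ℝ) : IsProbabilityMeasure (cwMeasure n θ) := by
  rw [cwMeasure_eq_tilted]
  exact isProbabilityMeasure_tilted .of_finite

lemma integral_cwMeasure {E : Type*} [NormedAddCommGroup E] [NormedSpace ℝ E] [CompleteSpace E]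
    (n : ℕ) (θ : ℝ) (g : (Fin n → Bool) → E) :
    ∫ x, g x ∂cwMeasure n θ = (∑ x, Real.exp (n * θ * mag n x ^ 2 / 2))⁻¹ •
      ∑ x, Real.exp (n * θ * mag n x ^ 2 / 2) • g x := by
  rw [cwMeasure_eq_tilted, integral_tilted_eq_inv_smul_integral, integral_count, integral_count]

lemma integrable_exp_quartic (h : ℝ) :
    Integrable fun u : ℝ => Real.exp (-(u ^ 4) / 12 + h * u ^ 2 / 2) := by
  refine ((integrable_exp_neg_mul_sq one_pos).const_mul
    (Real.exp (3 * (h / 2 + 1) ^ 2))).mono' (by fun_prop) (ae_of_all _ fun u => ?_)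
  rw [Real.norm_of_nonneg (Real.exp_nonneg _), ← Real.exp_add]
  refine Real.exp_le_exp.2 ?_
  linarith [sq_nonneg (u ^ 2 - 6 * (h / 2 + 1))]

lemma integral_exp_quartic_pos (h : ℝ) :
    0 < ∫ u : ℝ, Real.exp (-(u ^ 4) / 12 + h * u ^ 2 / 2) :=
  integral_exp_pos (integrable_exp_quartic h)

lemma Hmeasure_eq_tilted (h : ℝ) :
    Hmeasure h = volume.tilted fun u => -(u ^ 4) / 12 + h * u ^ 2 / 2 := by
  simp_rw [Hmeasure, Fcrit, Real.exp_sub, Real.exp_log (integral_exp_quartic_pos h)]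
  rfl

instance isProbabilityMeasure_Hmeasure (h : ℝ) : IsProbabilityMeasure (Hmeasure h) := by
  rw [Hmeasure_eq_tilted]
  exact isProbabilityMeasure_tilted (integrable_exp_quartic h)

end Tilted

section Asymptotics

lemma Zcw_eq {n : ℕ} (hn : 0 < n) {θ : ℝ} (hθ : 0 < θ) :
    Zcw n θ = n * Real.log 2 + Real.log (√(n : ℝ) / (2 * Real.pi)) / 2 +
      (Real.log θ / 2 + Real.log (∫ u, critKernel √(n : ℝ) θ u)) := by
  have sum_pos : 0 < ∑ x, Real.exp (n * θ * mag n x ^ 2 / 2) :=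
    Finset.sum_pos (fun _ _ => Real.exp_pos _) Finset.univ_nonempty
  have partition := two_pow_mul_integral_critKernel hn hθ
  have integral_pos : 0 < ∫ u, critKernel √(n : ℝ) θ u := by
    refine (mul_pos_iff_of_pos_left (show (0 : ℝ) < 2 ^ n by positivity)).1 ?_
    rw [partition]
    positivity
  have log_partition := congrArg Real.log partition
  rw [Real.log_mul (by positivity) integral_pos.ne', Real.log_mul (by positivity) sum_pos.ne',
    Real.log_pow, Real.log_sqrt (by positivity), ← Zcw,
    show 2 * Real.pi / (θ * √(n : ℝ)) = (θ * (√(n : ℝ) / (2 * Real.pi)))⁻¹ by field_simp,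
    Real.log_inv, Real.log_mul hθ.ne' (by positivity)] at log_partition
  linarith

variable {θ : ℕ → ℝ} {h : ℝ}

lemma tendsto_sqrt_natCast_atTop : Tendsto (fun n : ℕ => √(n : ℝ)) atTop atTop :=
  Real.tendsto_sqrt_atTop.comp tendsto_natCast_atTop_atTop

lemma tendsto_Zcw_sub (hθ : Tendsto (fun n : ℕ => √(n : ℝ) * (θ n - 1)) atTop (𝓝 h)) :
    Tendsto (fun n : ℕ =>
      Zcw n (θ n) - (n * Real.log 2 + Real.log (√(n : ℝ) / (2 * Real.pi)) / 2))
      atTop (𝓝 (Fcrit h)) := by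
  have hθ_one := tendsto_one_of_tendsto_mul_sub_one tendsto_sqrt_natCast_atTop hθ
  have log_integral : Tendsto (fun n : ℕ => Real.log (∫ u, critKernel √(n : ℝ) (θ n) u)) atTop
      (𝓝 (Fcrit h)) :=
    (tendsto_integral_critKernel tendsto_sqrt_natCast_atTop hθ).log
      (integral_exp_quartic_pos h).ne'
  have sum_tendsto := ((hθ_one.log one_ne_zero).div_const 2).add log_integral
  rw [Real.log_one, zero_div, zero_add] at sum_tendsto
  refine sum_tendsto.congr' ?_
  filter_upwards [eventually_gt_atTop 0, hθ_one.eventually_const_lt one_pos] with n hn hθ_pos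
  rw [Zcw_eq hn hθ_pos, add_sub_cancel_left]

lemma tendsto_Zcw_one_add_div_sqrt_sub (h : ℝ) :
    Tendsto (fun n : ℕ => Zcw n (1 + h / √(n : ℝ)) - Zcw n 1) atTop (𝓝 (Fcrit h - Fcrit 0)) := by
  have critical_window :
      Tendsto (fun n : ℕ => √(n : ℝ) * (1 + h / √(n : ℝ) - 1)) atTop (𝓝 h) := by
    refine tendsto_const_nhds.congr' ?_
    filter_upwards [tendsto_sqrt_natCast_atTop.eventually_ne_atTop 0] with n hn
    rw [add_sub_cancel_left, mul_div_cancel₀ _ hn]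
  have critical_point : Tendsto (fun n : ℕ => √(n : ℝ) * (1 - 1)) atTop (𝓝 0) := by simp
  simpa only [sub_sub_sub_cancel_right] using
    (tendsto_Zcw_sub critical_window).sub (tendsto_Zcw_sub (θ := fun _ => 1) critical_point)

lemma integral_cexp_critMag_cwMeasure {n : ℕ} (hn : 0 < n) {θ : ℝ} (hθ : 0 < θ) (t : ℝ) :
    ∫ x, Complex.exp (t * critMag n x * Complex.I) ∂cwMeasure n θ =
      Real.exp (t ^ 2 / (2 * (θ * √(n : ℝ)))) • (∫ u, critKernel √(n : ℝ) θ u)⁻¹ •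
        ∫ u, critKernel √(n : ℝ) θ u • Complex.exp (t * u * Complex.I) := by
  have two_pow_ne : (2 : ℝ) ^ n ≠ 0 := by positivity
  have sqrt_ne : √(2 * Real.pi / (θ * √(n : ℝ))) ≠ 0 := by positivity
  rw [integral_cwMeasure, eq_div_of_mul_eq two_pow_ne
      ((mul_comm _ _).trans (two_pow_mul_integral_critKernel hn hθ)),
    (eq_inv_smul_iff₀ two_pow_ne).2 (two_pow_smul_integral_critKernel_smul_cexp hn hθ t),
    smul_smul, smul_smul, smul_smul, neg_div, Real.exp_neg]
  congr 1
  field_simp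

theorem tendstoInDistribution_critMag
    (hθ : Tendsto (fun n : ℕ => √(n : ℝ) * (θ n - 1)) atTop (𝓝 h)) :
    TendstoInDistribution critMag atTop id (fun n => cwMeasure n (θ n)) (Hmeasure h) where
  forall_aemeasurable _ := (measurable_of_finite _).aemeasurable
  aemeasurable_limit := aemeasurable_id
  tendsto := by
    have hθ_one := tendsto_one_of_tendsto_mul_sub_one tendsto_sqrt_natCast_atTop hθ
    refine ProbabilityMeasure.tendsto_iff_tendsto_charFun.2 fun t => ?_
    have gaussian_factor :
        Tendsto (fun n : ℕ => Real.exp (t ^ 2 / (2 * (θ n * √(n : ℝ))))) atTop (𝓝 1) := by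
      rw [← Real.exp_zero]
      exact (tendsto_const_nhds.div_atTop ((hθ_one.pos_mul_atTop one_pos
        tendsto_sqrt_natCast_atTop).const_mul_atTop two_pos)).rexp
    have mass := tendsto_integral_critKernel tendsto_sqrt_natCast_atTop hθ
    have fourier := tendsto_integral_critKernel_smul
      (g := fun u => Complex.exp (t * u * Complex.I)) (B := 1)
      tendsto_sqrt_natCast_atTop hθ (by fun_prop)
      fun u => by rw [← Complex.ofReal_mul, Complex.norm_exp_ofReal_mul_I]
    have charFun_tendsto := gaussian_factor.smul
      ((mass.inv₀ (integral_exp_quartic_pos h).ne').smul fourier)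
    rw [one_smul, ← integral_tilted_eq_inv_smul_integral, ← Hmeasure_eq_tilted] at charFun_tendsto
    simp only [ProbabilityMeasure.coe_mk, Measure.map_id, charFun_apply_real]
    refine charFun_tendsto.congr' ?_
    filter_upwards [eventually_gt_atTop 0, hθ_one.eventually_const_lt one_pos] with n hn hθ_pos
    rw [integral_map (measurable_of_finite _).aemeasurable (by fun_prop),
      integral_cexp_critMag_cwMeasure hn hθ_pos]

end Asymptotics

section Slutsky

lemma map_prodMk_const {Ω E F : Type*} {mΩ : MeasurableSpace Ω} [MeasurableSpace E]
    [MeasurableSpace F] {ν : Measure Ω} [SFinite ν] {Y : Ω → E} (hY : AEMeasurable Y ν) (a : F) :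
    ν.map (fun ω => (Y ω, a)) = (ν.map Y).prod (Measure.dirac a) := by
  rw [Measure.prod_dirac, AEMeasurable.map_map_of_aemeasurable (by fun_prop) hY]
  rfl

variable {ι E F Ω' : Type*} {Ω : ι → Type*} {m : ∀ i, MeasurableSpace (Ω i)}
  {μ : ∀ i, Measure (Ω i)} [∀ i, IsProbabilityMeasure (μ i)]
  {m' : MeasurableSpace Ω'} {μ' : Measure Ω'} [IsProbabilityMeasure μ']
  [TopologicalSpace E] [MeasurableSpace E] [OpensMeasurableSpace E]
  [TopologicalSpace F] [MeasurableSpace F] [OpensMeasurableSpace F]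
  {X : ∀ i, Ω i → E} {Z : Ω' → E} {l : Filter ι} {c : ι → F} {c₀ : F}

lemma tendsto_integral_of_tendstoInDistribution (hX : TendstoInDistribution X l Z μ μ')
    (f : BoundedContinuousFunction E ℝ) :
    Tendsto (fun i => ∫ ω, f (X i ω) ∂μ i) l (𝓝 (∫ ω, f (Z ω) ∂μ')) := by
  have law_tendsto := ProbabilityMeasure.tendsto_iff_forall_integral_tendsto.1 hX.tendsto f
  simp only [ProbabilityMeasure.coe_mk] at law_tendsto
  rw [integral_map hX.aemeasurable_limit f.continuous.aestronglyMeasurable] at law_tendsto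
  simpa only [integral_map (hX.forall_aemeasurable _) f.continuous.aestronglyMeasurable]
    using law_tendsto

lemma tendstoInDistribution_prodMk_const
    [TopologicalSpace.PseudoMetrizableSpace E] [SecondCountableTopology E]
    [TopologicalSpace.PseudoMetrizableSpace F] [SecondCountableTopology F]
    (hX : TendstoInDistribution X l Z μ μ') (hc : Tendsto c l (𝓝 c₀)) :
    TendstoInDistribution (fun i ω => (X i ω, c i)) l (fun ω => (Z ω, c₀)) μ μ' where
  forall_aemeasurable i := (hX.forall_aemeasurable i).prodMk aemeasurable_const
  aemeasurable_limit := hX.aemeasurable_limit.prodMk aemeasurable_const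
  tendsto := by
    have prod_tendsto := (ProbabilityMeasure.continuous_prod.tendsto _).comp
      (hX.tendsto.prodMk_nhds ((continuous_diracProba.tendsto c₀).comp hc))
    exact (prod_tendsto.congr fun i =>
      (Subtype.ext (map_prodMk_const (hX.forall_aemeasurable i) (c i))).symm).mono_right
        (congrArg (fun ν : ProbabilityMeasure (E × F) => 𝓝 ν)
          (Subtype.ext (map_prodMk_const hX.aemeasurable_limit c₀).symm)).le

end Slutsky

theorem stmt18 (h : ℝ) :
    ∀ f : BoundedContinuousFunction ℝ ℝ,
      Tendsto (fun n : ℕ =>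
          ∫ x, f (h / (2 * Real.sqrt (n : ℝ)) * ((n : ℝ) * mag n x ^ 2) -
              (Zcw n (1 + h / Real.sqrt (n : ℝ)) - Zcw n 1)) ∂ cwMeasure n 1)
        atTop
        (nhds (∫ u, f (h / 2 * u ^ 2 - Fcrit h + Fcrit 0) ∂ Hmeasure 0)) := by
  intro f
  have critMag_tendsto := tendstoInDistribution_critMag (θ := fun _ => 1) (h := 0) (by simp)
  have llr_tendsto := (tendstoInDistribution_prodMk_const critMag_tendsto
    (tendsto_Zcw_one_add_div_sqrt_sub h)).continuous_comp
    (g := fun p : ℝ × ℝ => h / 2 * p.1 ^ 2 - p.2) (by fun_prop)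
  simpa only [div_two_mul_sqrt_mul_mag_sq, Function.comp_def, id, sub_add]
    using tendsto_integral_of_tendstoInDistribution llr_tendsto f
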